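/- Let E ∈ K^{m×σ}, M ∈ K^{σ×σ}, s ∈ ℕ^m, and let P_1 ∈ K[X]^{m×m} be s-reduced and such that every row of P_1 is an interpolant for (E,M). Then P_1 is an interpolation basis for (E,M) if and only if the multiset of s-row degrees of P_1 equals {s_1+δ_1,…,s_m+δ_m}, where (δ_1,…,δ_m) is the s-minimal degree of (E,M). -/

import Mathlib

open Polynomial Matrix

/-- Priority comparison on pairs `(c,d)`: lexicographic on `(s_c + d, c)`. -/
def keyLt {m : ℕ} (s : Fin m → ℕ) (x y : Fin m × ℕ) : Prop :=
  s x.1 + x.2 < s y.1 + y.2 ∨ (s x.1 + x.2 = s y.1 + y.2 ∧ x.1 < y.1)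

/-- Row `(c,d)` of the priority-permuted Krylov matrix is a linear combination of the
earlier rows. -/
def DepEarlier {K : Type*} [Field K] {m σ : ℕ} (E : Matrix (Fin m) (Fin σ) K)
    (M : Matrix (Fin σ) (Fin σ) K) (s : Fin m → ℕ) (δ : ℕ) (c : Fin m) (d : ℕ) : Prop :=
  Matrix.vecMul (E c) (M ^ d) ∈
    Submodule.span K
      ((fun y : Fin m × ℕ => Matrix.vecMul (E y.1) (M ^ y.2)) ''
        {y | y.2 ≤ δ ∧ keyLt s y (c, d)})

/-- `dm` is the `s`-minimal degree of `(E,M)`. -/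
def IsMinDeg {K : Type*} [Field K] {m σ : ℕ} (E : Matrix (Fin m) (Fin σ) K)
    (M : Matrix (Fin σ) (Fin σ) K) (s : Fin m → ℕ) (δ : ℕ) (dm : Fin m → ℕ) : Prop :=
  ∀ c, DepEarlier E M s δ c (dm c) ∧ ∀ d, d < dm c → ¬ DepEarlier E M s δ c d

/-- The `s`-row degree of row `i` of `P`. -/
noncomputable def rowDegW {K : Type*} [Field K] {k m : ℕ} (s : Fin m → ℕ)
    (P : Matrix (Fin k) (Fin m) (Polynomial K)) (i : Fin k) : WithBot ℕ :=
  Finset.univ.sup fun j => (P i j).degree + (s j : WithBot ℕ)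

/-- The `s`-leading matrix of `P`. -/
noncomputable def leadMat {K : Type*} [Field K] {k m : ℕ} (s : Fin m → ℕ)
    (P : Matrix (Fin k) (Fin m) (Polynomial K)) : Matrix (Fin k) (Fin m) K :=
  fun i j =>
    if (P i j).degree + (s j : WithBot ℕ) = rowDegW s P i then (P i j).leadingCoeff else 0

/-- `P` is `s`-reduced. -/
def IsReducedS {K : Type*} [Field K] {k m : ℕ} (s : Fin m → ℕ)
    (P : Matrix (Fin k) (Fin m) (Polynomial K)) : Prop :=
  (leadMat s P).rank = k

/-- `p` is an interpolant for `(E,M)`. -/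
def IsInterpolant {K : Type*} [Field K] {m σ : ℕ} (E : Matrix (Fin m) (Fin σ) K)
    (M : Matrix (Fin σ) (Fin σ) K) (p : Fin m → Polynomial K) : Prop :=
  ∑ c, Matrix.vecMul (E c) (Polynomial.aeval M (p c)) = 0

/-- The rows of `P` form a basis of the `K[X]`-module of interpolants for `(E,M)`. -/
def IsInterpBasis {K : Type*} [Field K] {m σ : ℕ} (E : Matrix (Fin m) (Fin σ) K)
    (M : Matrix (Fin σ) (Fin σ) K) (P : Matrix (Fin m) (Fin m) (Polynomial K)) : Prop :=
  LinearIndependent (Polynomial K) (fun i => P i) ∧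
    ∀ q : Fin m → Polynomial K,
      IsInterpolant E M q ↔ q ∈ Submodule.span (Polynomial K) (Set.range fun i => P i)


/-- vectors of shifted degree less than `D` -/
def Fs (K : Type*) [Field K] {m : ℕ} (s : Fin m → ℕ) (D : ℕ) :
    Submodule K (Fin m → Polynomial K) where
  carrier := {p | ∀ j k, D ≤ s j + k → (p j).coeff k = 0}
  zero_mem' := by intro j k _; simp
  add_mem' := by
    intro a b ha hb j k h
    simp [ha j k h, hb j k h]
  smul_mem' := by
    intro c a ha j k h
    simp [ha j k h]

theorem mem_Fs {K : Type*} [Field K] {m : ℕ} {s : Fin m → ℕ} {D : ℕ}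
    {p : Fin m → Polynomial K} :
    p ∈ Fs K s D ↔ ∀ j k, D ≤ s j + k → (p j).coeff k = 0 := Iff.rfl

theorem Fs_mem_degreeLT {K : Type*} [Field K] {m : ℕ} {s : Fin m → ℕ} {D : ℕ}
    {p : Fin m → Polynomial K} :
    p ∈ Fs K s D ↔ ∀ j, p j ∈ degreeLT K (D - s j) := by
  simp only [mem_Fs, mem_degreeLT, degree_lt_iff_coeff_zero]
  refine forall_congr' fun j => forall_congr' fun k => ?_
  rw [Nat.sub_le_iff_le_add']

/-- coordinates -/
noncomputable def FsEquiv (K : Type*) [Field K] {m : ℕ} (s : Fin m → ℕ) (D : ℕ) :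
    Fs K s D ≃ₗ[K] ((j : Fin m) → (Fin (D - s j) → K)) :=
  LinearEquiv.trans
  { toFun := fun p j => (⟨p.1 j, Fs_mem_degreeLT.1 p.2 j⟩ : degreeLT K (D - s j))
    invFun := fun q => ⟨fun j => (q j).1, Fs_mem_degreeLT.2 fun j => (q j).2⟩
    map_add' := fun _ _ => rfl
    map_smul' := fun _ _ => rfl
    left_inv := fun _ => rfl
    right_inv := fun _ => rfl }
  (LinearEquiv.piCongrRight fun j => degreeLTEquiv K (D - s j))

instance Fs_finite (K : Type*) [Field K] {m : ℕ} (s : Fin m → ℕ) (D : ℕ) :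
    Module.Finite K (Fs K s D) :=
  Module.Finite.equiv (FsEquiv K s D).symm

theorem Fs_finrank (K : Type*) [Field K] {m : ℕ} (s : Fin m → ℕ) (D : ℕ) :
    Module.finrank K (Fs K s D) = ∑ j, (D - s j) := by
  rw [(FsEquiv K s D).finrank_eq, Module.finrank_pi_fintype]
  simp

theorem exists_mem_Fs {K : Type*} [Field K] {m : ℕ} (s : Fin m → ℕ)
    (p : Fin m → Polynomial K) : ∃ D, p ∈ Fs K s D := by
  refine ⟨∑ j, (s j + (p j).natDegree + 1), fun j k h => ?_⟩
  apply coeff_eq_zero_of_natDegree_lt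
  have := Finset.single_le_sum (f := fun j => s j + (p j).natDegree + 1)
    (fun _ _ => Nat.zero_le _) (Finset.mem_univ j)
  omega

theorem eq_zero_of_mem_Fs_zero {K : Type*} [Field K] {m : ℕ} {s : Fin m → ℕ}
    {p : Fin m → Polynomial K} (h : p ∈ Fs K s 0) : p = 0 := by
  funext j; ext k; simpa using h j k (Nat.zero_le _)

/-- abstract leading matrix -/
noncomputable def ldm {K : Type*} [Field K] {m : ℕ} (s r : Fin m → ℕ)
    (P : Matrix (Fin m) (Fin m) (Polynomial K)) : Matrix (Fin m) (Fin m) K :=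
  fun i j => if s j ≤ r i then (P i j).coeff (r i - s j) else 0

theorem coeff_step {K : Type*} [Field K] {u p : Polynomial K} {s r D : ℕ}
    (hu : ∀ k, D + 1 ≤ r + k → u.coeff k = 0) (hp : ∀ k, r + 1 ≤ s + k → p.coeff k = 0) :
    (if s ≤ D then (u * p).coeff (D - s) else 0) =
      (if r ≤ D then u.coeff (D - r) else 0) * (if s ≤ r then p.coeff (r - s) else 0) := by
  by_cases h1 : r ≤ D
  · by_cases h2 : s ≤ r
    · have h3 : s ≤ D := h2.trans h1
      rw [if_pos h1, if_pos h2, if_pos h3]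
      have : D - s = (D - r) + (r - s) := by omega
      rw [this]
      apply coeff_mul_add_eq_of_natDegree_le
      · rw [natDegree_le_iff_coeff_eq_zero]
        intro k hk; exact hu k (by omega)
      · rw [natDegree_le_iff_coeff_eq_zero]
        intro k hk; exact hp k (by omega)
    · have : p = 0 := by ext k; simpa using hp k (by omega)
      simp [this]
  · have : u = 0 := by ext k; simpa using hu k (by omega)
    simp [this]

theorem coeff_mul_low {K : Type*} [Field K] {u p : Polynomial K} {s r D : ℕ}
    (hu : ∀ k, D ≤ r + k → u.coeff k = 0) (hp : ∀ k, r + 1 ≤ s + k → p.coeff k = 0)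
    (k : ℕ) (hk : D ≤ s + k) : (u * p).coeff k = 0 := by
  rw [coeff_mul]
  refine Finset.sum_eq_zero fun x hx => ?_
  rw [Finset.HasAntidiagonal.mem_antidiagonal] at hx
  by_cases h : D ≤ r + x.1
  · rw [hu _ h, zero_mul]
  · rw [hp _ (by omega), mul_zero]

theorem comb_mem {K : Type*} [Field K] {m : ℕ} {s r : Fin m → ℕ}
    {P : Matrix (Fin m) (Fin m) (Polynomial K)} (hP : ∀ i, P i ∈ Fs K s (r i + 1))
    {u : Fin m → Polynomial K} {D : ℕ} (hu : u ∈ Fs K r D) :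
    (Matrix.vecMul u P) ∈ Fs K s D := by
  intro j k hk
  simp only [Matrix.vecMul, dotProduct, finsetSum_coeff]
  exact Finset.sum_eq_zero fun i _ => coeff_mul_low (hu i) (hP i j) k hk

theorem pred_step {K : Type*} [Field K] {m : ℕ} {s r : Fin m → ℕ}
    {P : Matrix (Fin m) (Fin m) (Polynomial K)} (hP : ∀ i, P i ∈ Fs K s (r i + 1))
    (hL : Function.Injective (ldm s r P).vecMul)
    {u : Fin m → Polynomial K} {D : ℕ} (hu : u ∈ Fs K r (D + 1))
    (h : (Matrix.vecMul u P) ∈ Fs K s D) : u ∈ Fs K r D := by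
  have key : Matrix.vecMul (fun i => if r i ≤ D then (u i).coeff (D - r i) else 0)
      (ldm s r P) = 0 := by
    funext j
    simp only [Matrix.vecMul, dotProduct, ldm, Pi.zero_apply]
    rw [← Finset.sum_congr rfl fun i _ => coeff_step (hu i) (hP i j)]
    by_cases hj : s j ≤ D
    · simp only [hj, if_true]
      have := h j (D - s j) (by omega)
      simpa only [Matrix.vecMul, dotProduct, finsetSum_coeff] using this
    · simp [hj]
  have key2 := hL (key.trans (Matrix.zero_vecMul _).symm)
  intro i k hk
  by_cases h1 : D + 1 ≤ r i + k
  · exact hu i k h1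
  · have := congrFun key2 i
    have h2 : r i ≤ D := by omega
    have h3 : D - r i = k := by omega
    simpa [h2, h3] using this

theorem pred_deg {K : Type*} [Field K] {m : ℕ} {s r : Fin m → ℕ}
    {P : Matrix (Fin m) (Fin m) (Polynomial K)} (hP : ∀ i, P i ∈ Fs K s (r i + 1))
    (hL : Function.Injective (ldm s r P).vecMul)
    {u : Fin m → Polynomial K} {D : ℕ}
    (h : (Matrix.vecMul u P) ∈ Fs K s D) : u ∈ Fs K r D := by
  obtain ⟨N, hN⟩ := exists_mem_Fs r u
  have : ∀ k, u ∈ Fs K r (D + k) → u ∈ Fs K r D := by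
    intro k
    induction k with
    | zero => exact id
    | succ k ih =>
      intro hu
      refine ih (pred_step hP hL hu ?_)
      intro j l hl
      exact h j l (by omega)
  refine this N ?_
  intro j l hl
  exact hN j l (by omega)

/-- the combination map, over `K` -/
noncomputable def Psi {K : Type*} [Field K] {m : ℕ}
    (P : Matrix (Fin m) (Fin m) (Polynomial K)) :
    (Fin m → Polynomial K) →ₗ[K] (Fin m → Polynomial K) :=
  (Matrix.vecMulLinear P).restrictScalars K

theorem Psi_apply {K : Type*} [Field K] {m : ℕ}
    (P : Matrix (Fin m) (Fin m) (Polynomial K)) (u) : Psi P u = Matrix.vecMul u P := rfl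

theorem Psi_inj {K : Type*} [Field K] {m : ℕ} {s r : Fin m → ℕ}
    {P : Matrix (Fin m) (Fin m) (Polynomial K)} (hP : ∀ i, P i ∈ Fs K s (r i + 1))
    (hL : Function.Injective (ldm s r P).vecMul) : Function.Injective (Psi P) := by
  rw [← LinearMap.ker_eq_bot, LinearMap.ker_eq_bot']
  intro u hu
  apply eq_zero_of_mem_Fs_zero (s := r)
  apply pred_deg hP hL
  rw [← Psi_apply, hu]; exact Submodule.zero_mem _

theorem map_Psi_finrank {K : Type*} [Field K] {m : ℕ} {s r : Fin m → ℕ}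
    {P : Matrix (Fin m) (Fin m) (Polynomial K)} (hP : ∀ i, P i ∈ Fs K s (r i + 1))
    (hL : Function.Injective (ldm s r P).vecMul) (D : ℕ) :
    Module.finrank K ((Fs K r D).map (Psi P)) = ∑ i, (D - r i) := by
  rw [← Fs_finrank K r D]
  exact (Submodule.equivMapOfInjective (Psi P) (Psi_inj hP hL) _).finrank_eq.symm

theorem map_Psi_eq {K : Type*} [Field K] {m : ℕ} {s r : Fin m → ℕ}
    {P : Matrix (Fin m) (Fin m) (Polynomial K)} (hP : ∀ i, P i ∈ Fs K s (r i + 1))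
    (hL : Function.Injective (ldm s r P).vecMul) (D : ℕ) :
    (Fs K r D).map (Psi P) = LinearMap.range (Psi P) ⊓ Fs K s D := by
  ext q
  constructor
  · rintro ⟨u, hu, rfl⟩
    exact ⟨⟨u, rfl⟩, comb_mem hP hu⟩
  · rintro ⟨⟨u, rfl⟩, h⟩
    exact ⟨u, pred_deg hP hL h, rfl⟩

theorem multiset_of_sums {m : ℕ} (f g : Fin m → ℕ)
    (h : ∀ D, ∑ i, (D - f i) = ∑ i, (D - g i)) :
    Finset.univ.val.map f = Finset.univ.val.map g := by
  have cnt : ∀ (f : Fin m → ℕ) a, (Finset.univ.val.map f).count a =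
      ∑ i, if f i = a then 1 else 0 := by
    intro f a
    rw [Multiset.count_map, Finset.sum_boole]
    simp only [eq_comm (a := a)]
    rfl
  ext a
  rw [cnt, cnt]
  rcases a with _ | a
  · have := h 1
    have e : ∀ x : ℕ, (if x = 0 then 1 else 0) = 1 - x := by intro x; split_ifs <;> omega
    simp only [e]; exact this
  · have e : ∀ f : Fin m → ℕ, ∑ i, (a + 2 - f i) + ∑ i, (a - f i) =
        2 * ∑ i, (a + 1 - f i) + ∑ i, if f i = a + 1 then 1 else 0 := by
      intro f
      rw [← Finset.sum_add_distrib, Finset.mul_sum, ← Finset.sum_add_distrib]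
      refine Finset.sum_congr rfl fun i _ => ?_
      split_ifs <;> omega
    have e1 := e f
    have e2 := e g
    rw [h, h, h] at e1
    omega

/-- the interpolation map -/
noncomputable def phi {K : Type*} [Field K] {m σ : ℕ} (E : Matrix (Fin m) (Fin σ) K)
    (M : Matrix (Fin σ) (Fin σ) K) : (Fin m → Polynomial K) →ₗ[K] (Fin σ → K) where
  toFun p := ∑ c, Matrix.vecMul (E c) (Polynomial.aeval M (p c))
  map_add' p q := by
    simp [Matrix.vecMul_add, Finset.sum_add_distrib]
  map_smul' a p := by
    simp [Matrix.vecMul_smul, Finset.smul_sum]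

theorem interp_iff {K : Type*} [Field K] {m σ : ℕ} (E : Matrix (Fin m) (Fin σ) K)
    (M : Matrix (Fin σ) (Fin σ) K) (p : Fin m → Polynomial K) :
    IsInterpolant E M p ↔ p ∈ LinearMap.ker (phi E M) := Iff.rfl

theorem phi_smul {K : Type*} [Field K] {m σ : ℕ} (E : Matrix (Fin m) (Fin σ) K)
    (M : Matrix (Fin σ) (Fin σ) K) (a : Polynomial K) (p : Fin m → Polynomial K) :
    phi E M (a • p) = Matrix.vecMul (phi E M p) (aeval M a) := by
  simp only [phi, LinearMap.coe_mk, AddHom.coe_mk, Pi.smul_apply, smul_eq_mul]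
  rw [Matrix.sum_vecMul]
  refine Finset.sum_congr rfl fun c _ => ?_
  rw [Matrix.vecMul_vecMul, mul_comm a, map_mul]

theorem range_le_ker {K : Type*} [Field K] {m σ : ℕ} {E : Matrix (Fin m) (Fin σ) K}
    {M : Matrix (Fin σ) (Fin σ) K} {P : Matrix (Fin m) (Fin m) (Polynomial K)}
    (h : ∀ i, IsInterpolant E M (P i)) : LinearMap.range (Psi P) ≤ LinearMap.ker (phi E M) := by
  rintro _ ⟨u, rfl⟩
  rw [Psi_apply, Matrix.vecMul_eq_sum]
  refine Submodule.sum_mem _ fun i _ => ?_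
  have := (interp_iff E M _).1 (h i)
  rw [LinearMap.mem_ker] at this ⊢
  rw [phi_smul, this, Matrix.zero_vecMul]

/-- monomial vectors -/
noncomputable def mon (K : Type*) [Field K] {m : ℕ} (y : Fin m × ℕ) : Fin m → Polynomial K :=
  Pi.single y.1 (X ^ y.2)

theorem mon_coeff (K : Type*) [Field K] {m : ℕ} (y : Fin m × ℕ) (j : Fin m) (k : ℕ) :
    ((mon K y) j).coeff k = if (j, k) = y then 1 else 0 := by
  rcases y with ⟨c, d⟩
  unfold mon
  by_cases h : j = c
  · subst h; simp [coeff_X_pow]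
  · simp [h]

theorem phi_mon {K : Type*} [Field K] {m σ : ℕ} (E : Matrix (Fin m) (Fin σ) K)
    (M : Matrix (Fin σ) (Fin σ) K) (y : Fin m × ℕ) :
    phi E M (mon K y) = Matrix.vecMul (E y.1) (M ^ y.2) := by
  simp only [phi, mon, LinearMap.coe_mk, AddHom.coe_mk]
  rw [Finset.sum_eq_single y.1]
  · simp
  · intro b _ hb; simp [hb]
  · simp

theorem mem_span_mon {K : Type*} [Field K] {m : ℕ} (S : Set (Fin m × ℕ))
    (q : Fin m → Polynomial K) :
    q ∈ Submodule.span K (mon K '' S) ↔ ∀ j k, (q j).coeff k ≠ 0 → (j, k) ∈ S := by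
  constructor
  · intro h
    induction h using Submodule.span_induction with
    | mem x hx =>
      obtain ⟨y, hy, rfl⟩ := hx
      intro j k hjk
      rw [mon_coeff] at hjk
      have : (j, k) = y := by by_contra h; simp [h] at hjk
      rwa [this]
    | zero => intro j k h; simp at h
    | add a b _ _ ha hb =>
      intro j k h
      by_cases h1 : (a j).coeff k = 0
      · apply hb; simpa [h1] using h
      · exact ha _ _ h1
    | smul c a _ ha =>
      intro j k h
      apply ha
      intro h0
      simp [h0] at h
  · intro h
    have hq : q = ∑ j, ∑ k ∈ (q j).support, (q j).coeff k • mon K (j, k) := by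
      funext i; ext l
      simp only [Finset.sum_apply, finsetSum_coeff, Pi.smul_apply, coeff_smul, mon_coeff,
        smul_eq_mul]
      rw [Finset.sum_eq_single i]
      · rw [Finset.sum_eq_single l]
        · simp
        · intro b _ hb; simp [hb.symm]
        · intro hl; simpa using hl
      · intro b _ hb; simp [hb.symm]
      · simp
    rw [hq]
    refine Submodule.sum_mem _ fun j _ => Submodule.sum_mem _ fun k hk => ?_
    exact Submodule.smul_mem _ _ (Submodule.subset_span ⟨_, h j k (mem_support_iff.1 hk), rfl⟩)

theorem dep_iff {K : Type*} [Field K] {m σ : ℕ} (E : Matrix (Fin m) (Fin σ) K)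
    (M : Matrix (Fin σ) (Fin σ) K) (s : Fin m → ℕ) (δ : ℕ) (c : Fin m) (d : ℕ) :
    DepEarlier E M s δ c d ↔ ∃ q : Fin m → Polynomial K,
      (∀ j k, (q j).coeff k ≠ 0 → k ≤ δ ∧ keyLt s (j, k) (c, d)) ∧
      phi E M (mon K (c, d) - q) = 0 := by
  have himg : (fun y : Fin m × ℕ => Matrix.vecMul (E y.1) (M ^ y.2)) ''
        {y | y.2 ≤ δ ∧ keyLt s y (c, d)} =
        phi E M '' (mon K '' {y | y.2 ≤ δ ∧ keyLt s y (c, d)}) := by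
    rw [Set.image_image]
    simp only [phi_mon]
  unfold DepEarlier
  rw [himg, Submodule.span_image, Submodule.mem_map]
  refine exists_congr fun q => ?_
  rw [mem_span_mon, map_sub, phi_mon, sub_eq_zero, eq_comm (a := phi E M q)]
  rfl

theorem dep_of {K : Type*} [Field K] {m σ : ℕ} {E : Matrix (Fin m) (Fin σ) K}
    {M : Matrix (Fin σ) (Fin σ) K} {s : Fin m → ℕ} {δ : ℕ} {c : Fin m} {d : ℕ}
    {p : Fin m → Polynomial K} (hp : phi E M p = 0) (hc : (p c).coeff d ≠ 0)
    (h : ∀ j k, (p j).coeff k ≠ 0 → (j, k) ≠ (c, d) → k ≤ δ ∧ keyLt s (j, k) (c, d)) :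
    DepEarlier E M s δ c d := by
  rw [dep_iff]
  refine ⟨mon K (c, d) - ((p c).coeff d)⁻¹ • p, fun j k hjk => ?_, ?_⟩
  · have hne : (j, k) ≠ (c, d) := by
      intro he
      obtain ⟨rfl, rfl⟩ := Prod.mk.inj he
      apply hjk
      simp [mon_coeff, hc]
    refine h j k ?_ hne
    intro h0
    apply hjk
    simp [mon_coeff, hne, h0]
  · simp [hp]

theorem dm_le {K : Type*} [Field K] {m σ δ : ℕ} {E : Matrix (Fin m) (Fin σ) K}
    {M : Matrix (Fin σ) (Fin σ) K} {s : Fin m → ℕ} (hδ : (minpoly K M).natDegree ≤ δ)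
    {dm : Fin m → ℕ} (hdm : IsMinDeg E M s δ dm) (c : Fin m) : dm c ≤ δ := by
  refine le_trans ?_ hδ
  by_contra hlt
  refine (hdm c).2 _ (not_le.1 hlt) ?_
  have hmonic := minpoly.monic (Matrix.isIntegral M)
  apply dep_of (p := Pi.single c (minpoly K M))
  · simp only [phi, LinearMap.coe_mk, AddHom.coe_mk]
    refine Finset.sum_eq_zero fun j _ => ?_
    by_cases h : j = c
    · subst h; simp
    · simp [h]
  · simp only [Pi.single_eq_same]
    rw [hmonic.coeff_natDegree]; exact one_ne_zero
  · intro j k hjk hne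
    by_cases h : j = c
    · subst h
      simp only [Pi.single_eq_same] at hjk
      have h1 := le_natDegree_of_ne_zero hjk
      have h2 : k ≠ (minpoly K M).natDegree := fun h => hne (by rw [h])
      refine ⟨by omega, Or.inl ?_⟩
      simp only
      omega
    · simp [h] at hjk

theorem ker_zero {K : Type*} [Field K] {m σ δ : ℕ} {E : Matrix (Fin m) (Fin σ) K}
    {M : Matrix (Fin σ) (Fin σ) K} {s : Fin m → ℕ} (hδ : (minpoly K M).natDegree ≤ δ)
    {dm : Fin m → ℕ} (hdm : IsMinDeg E M s δ dm) {p : Fin m → Polynomial K}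
    (hp : phi E M p = 0) (h : ∀ j k, dm j ≤ k → (p j).coeff k = 0) : p = 0 := by
  classical
  by_contra hne
  let S : Finset (Fin m × ℕ) := Finset.univ.biUnion fun j => (p j).support.image fun k => (j, k)
  have hS : ∀ j k, (j, k) ∈ S ↔ (p j).coeff k ≠ 0 := by
    intro j k
    simp [S]
  have hSne : S.Nonempty := by
    by_contra hE
    rw [Finset.not_nonempty_iff_eq_empty] at hE
    apply hne
    funext j; ext k
    by_contra h0
    have := (hS j k).2 (by simpa using h0)
    rw [hE] at this
    simp at this
  obtain ⟨⟨c, d⟩, hcd, hmax⟩ := S.exists_max_image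
    (fun y => toLex (s y.1 + y.2, y.1)) hSne
  have hc := (hS c d).1 hcd
  have hlt : ∀ j k, (p j).coeff k ≠ 0 → k < dm j := by
    intro j k h0
    by_contra h1
    exact h0 (h j k (not_lt.1 h1))
  refine (hdm c).2 d (hlt c d hc) (dep_of hp hc ?_)
  intro j k hjk hn
  refine ⟨(hlt j k hjk).le.trans (dm_le hδ hdm j), ?_⟩
  have := hmax (j, k) ((hS j k).2 hjk)
  rw [Prod.Lex.toLex_le_toLex] at this
  rcases this with h1 | ⟨h1, h2⟩
  · exact Or.inl h1
  · refine Or.inr ⟨h1, lt_of_le_of_ne h2 ?_⟩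
    rintro rfl
    apply hn
    simp only at h1
    have : k = d := by
      omega
    rw [this]

theorem ker_upper {K : Type*} [Field K] {m σ δ : ℕ} {E : Matrix (Fin m) (Fin σ) K}
    {M : Matrix (Fin σ) (Fin σ) K} {s : Fin m → ℕ} (hδ : (minpoly K M).natDegree ≤ δ)
    {dm : Fin m → ℕ} (hdm : IsMinDeg E M s δ dm) (D : ℕ) :
    Module.finrank K (LinearMap.ker (phi E M) ⊓ Fs K s D : Submodule K _) ≤
      ∑ c, (D - (s c + dm c)) := by
  have hsum : ∑ c, (D - (s c + dm c)) =
      Module.finrank K ((c : Fin m) → (Fin (D - (s c + dm c)) → K)) := by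
    rw [Module.finrank_pi_fintype]; simp
  rw [hsum]
  let f : (LinearMap.ker (phi E M) ⊓ Fs K s D : Submodule K _) →ₗ[K]
      ((c : Fin m) → (Fin (D - (s c + dm c)) → K)) :=
    { toFun := fun p c k => (p.1 c).coeff (dm c + k)
      map_add' := by intro a b; funext c k; simp
      map_smul' := by intro a b; funext c k; simp }
  apply LinearMap.finrank_le_finrank_of_injective (f := f)
  rw [← LinearMap.ker_eq_bot, LinearMap.ker_eq_bot']
  rintro ⟨p, hp1, hp2⟩ h0
  apply Subtype.ext
  refine ker_zero hδ hdm hp1 fun j k hk => ?_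
  by_cases h : D ≤ s j + k
  · exact hp2 j k h
  · have := congrFun (congrFun h0 j) ⟨k - dm j, by omega⟩
    have e : dm j + (k - dm j) = k := by omega
    simpa [f, e] using this

theorem ker_lower {K : Type*} [Field K] {m σ δ : ℕ} {E : Matrix (Fin m) (Fin σ) K}
    {M : Matrix (Fin σ) (Fin σ) K} {s : Fin m → ℕ}
    {dm : Fin m → ℕ} (hdm : IsMinDeg E M s δ dm) (D : ℕ) :
    ∑ c, (D - (s c + dm c)) ≤
    Module.finrank K (LinearMap.ker (phi E M) ⊓ Fs K s D : Submodule K _) := by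
  have h := fun c => (dep_iff E M s δ c (dm c)).1 (hdm c).1
  choose q hq hphi using h
  let P : Matrix (Fin m) (Fin m) (Polynomial K) := fun c => mon K (c, dm c) - q c
  let r : Fin m → ℕ := fun c => s c + dm c
  have hq0 : ∀ c j k, ¬ keyLt s (j, k) (c, dm c) → (q c j).coeff k = 0 := by
    intro c j k hk
    by_contra h0
    exact hk (hq c j k h0).2
  have hP : ∀ c, P c ∈ Fs K s (r c + 1) := by
    intro c j k hk
    have h1 : (q c j).coeff k = 0 := by
      apply hq0
      rintro (h | h) <;> simp only [r] at * <;> omega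
    have h2 : (j, k) ≠ (c, dm c) := by
      intro he
      obtain ⟨rfl, rfl⟩ := Prod.mk.inj he
      simp only [r] at hk
      omega
    simp [P, mon_coeff, h1, h2]
  have hdiag : ∀ c, ldm s r P c c = 1 := by
    intro c
    have h1 : (q c c).coeff (dm c) = 0 := by
      apply hq0
      rintro (h | h)
      · exact lt_irrefl _ h
      · exact lt_irrefl _ h.2
    simp [ldm, r, P, mon_coeff, h1]
  have htri : ∀ c j, c < j → ldm s r P c j = 0 := by
    intro c j hcj
    unfold ldm
    split_ifs with hs
    · have h1 : (q c j).coeff (r c - s j) = 0 := by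
        apply hq0
        rintro (h | h)
        · simp only [r] at *; omega
        · exact lt_asymm h.2 hcj
      simp [P, mon_coeff, h1, hcj.ne']
    · rfl
  have hdet : (ldm s r P).det = 1 := by
    rw [Matrix.det_of_isLowerTriangular]
    · simp [hdiag]
    · intro i j hij
      exact htri i j hij
  have hL : Function.Injective (ldm s r P).vecMul := by
    rw [Matrix.vecMul_injective_iff_isUnit, Matrix.isUnit_iff_isUnit_det, hdet]
    exact isUnit_one
  have := map_Psi_finrank hP hL D
  rw [← this, map_Psi_eq hP hL]
  have : Module.Finite K (LinearMap.ker (phi E M) ⊓ Fs K s D : Submodule K _) :=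
    Submodule.finiteDimensional_inf_right _ _
  exact Submodule.finrank_mono (inf_le_inf_right _ (range_le_ker fun c => hphi c))

theorem isInterpBasis_iff_rowDeg_multiset_eq
    {K : Type*} [Field K] {m σ δ : ℕ}
    (E : Matrix (Fin m) (Fin σ) K) (M : Matrix (Fin σ) (Fin σ) K) (s : Fin m → ℕ)
    (hδ : (minpoly K M).natDegree ≤ δ)
    (dm : Fin m → ℕ) (hdm : IsMinDeg E M s δ dm)
    (P₁ : Matrix (Fin m) (Fin m) (Polynomial K))
    (hred : IsReducedS s P₁) (hrows : ∀ i, IsInterpolant E M (P₁ i)) :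
    IsInterpBasis E M P₁ ↔
      (Finset.univ.val.map fun i => rowDegW s P₁ i) =
        (Finset.univ.val.map fun c : Fin m => ((s c + dm c : ℕ) : WithBot ℕ)) := by
  have hli : LinearIndependent K (leadMat s P₁).row := by
    rw [linearIndependent_iff_card_eq_finrank_span, Set.finrank,
      ← Matrix.rank_eq_finrank_span_row, Fintype.card_fin]
    exact hred.symm
  have hle : ∀ i j, (P₁ i j).degree + (s j : WithBot ℕ) ≤ rowDegW s P₁ i := fun i j =>
    Finset.le_sup (f := fun j => (P₁ i j).degree + (s j : WithBot ℕ)) (Finset.mem_univ j)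
  have hbot : ∀ i, rowDegW s P₁ i ≠ ⊥ := by
    intro i hi
    apply hli.ne_zero i
    funext j
    have h1 := hle i j
    rw [hi, le_bot_iff, WithBot.add_eq_bot] at h1
    have h2 : P₁ i j = 0 := by
      rcases h1 with h1 | h1
      · exact degree_eq_bot.1 h1
      · exact absurd h1 (WithBot.natCast_ne_bot _)
    simp [Matrix.row, leadMat, h2]
  have hex : ∀ i, ∃ r : ℕ, rowDegW s P₁ i = ((r : ℕ) : WithBot ℕ) := by
    intro i
    obtain ⟨r, hr⟩ := WithBot.ne_bot_iff_exists.1 (hbot i)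
    exact ⟨r, hr.symm⟩
  choose r hr using hex
  have hP : ∀ i, P₁ i ∈ Fs K s (r i + 1) := by
    intro i j k hk
    by_contra h0
    have h1 := hle i j
    have h2 := le_degree_of_ne_zero h0
    rw [hr] at h1
    have h3 : ((k + s j : ℕ) : WithBot ℕ) ≤ (r i : WithBot ℕ) := by
      refine le_trans ?_ h1
      push_cast
      gcongr
    have h4 : k + s j ≤ r i := by exact_mod_cast h3
    omega
  have hlead : ldm s r P₁ = leadMat s P₁ := by
    funext i j
    unfold ldm leadMat
    rw [hr]
    by_cases h0 : P₁ i j = 0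
    · simp [h0]
    · rw [degree_eq_natDegree h0]
      have h1 : (((P₁ i j).natDegree : WithBot ℕ) + (s j : WithBot ℕ) = (r i : WithBot ℕ)) ↔
          (P₁ i j).natDegree + s j = r i := by norm_cast
      simp only [h1]
      have h2 := hle i j
      rw [degree_eq_natDegree h0, hr] at h2
      have h3 : (P₁ i j).natDegree + s j ≤ r i := by exact_mod_cast h2
      rw [if_pos (by omega)]
      split_ifs with h4
      · rw [← h4, Nat.add_sub_cancel]; rfl
      · apply coeff_eq_zero_of_natDegree_lt; omega
  have hL : Function.Injective (ldm s r P₁).vecMul := by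
    rw [hlead, Matrix.vecMul_injective_iff]
    exact hli
  have hrange : ∀ q, q ∈ Submodule.span (Polynomial K) (Set.range fun i => P₁ i) ↔
      q ∈ LinearMap.range (Psi P₁) := by
    intro q
    have : Submodule.span (Polynomial K) (Set.range fun i => P₁ i) =
      LinearMap.range (Matrix.vecMulLinear P₁) := (range_vecMulLinear P₁).symm
    rw [this]; rfl
  have hind : LinearIndependent (Polynomial K) (fun i => P₁ i) := by
    have := Psi_inj hP hL
    exact Matrix.vecMul_injective_iff.1 this
  have hle' := range_le_ker hrows
  have hdimN : ∀ D, Module.finrank K (LinearMap.range (Psi P₁) ⊓ Fs K s D : Submodule K _) =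
      ∑ i, (D - r i) := fun D => by rw [← map_Psi_eq hP hL, map_Psi_finrank hP hL]
  have hdimI : ∀ D, Module.finrank K (LinearMap.ker (phi E M) ⊓ Fs K s D : Submodule K _) =
      ∑ c, (D - (s c + dm c)) := fun D => le_antisymm (ker_upper hδ hdm D) (ker_lower hdm D)
  have hms : ((Finset.univ.val.map fun i => rowDegW s P₁ i) =
        (Finset.univ.val.map fun c : Fin m => ((s c + dm c : ℕ) : WithBot ℕ))) ↔
      Finset.univ.val.map r = Finset.univ.val.map (fun c => s c + dm c) := by
    simp only [hr]
    rw [← (Multiset.map_injective (f := fun n : ℕ => (n : WithBot ℕ))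
      (fun a b h => by simpa using h)).eq_iff, Multiset.map_map, Multiset.map_map]
    rfl
  rw [hms]
  constructor
  · rintro ⟨-, h⟩
    have heq : LinearMap.range (Psi P₁) = LinearMap.ker (phi E M) := by
      ext q
      rw [← hrange, ← interp_iff, h]
    apply multiset_of_sums
    intro D
    rw [← hdimN, ← hdimI, heq]
  · intro h
    have hs : ∀ D, ∑ i, (D - r i) = ∑ c, (D - (s c + dm c)) := by
      intro D
      have := congrArg (fun t => (t.map fun x => D - x).sum) h
      simp only [Multiset.map_map] at this
      exact this
    refine ⟨hind, fun q => ?_⟩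
    rw [hrange, interp_iff]
    refine ⟨fun hq => ?_, fun hq => hle' hq⟩
    obtain ⟨D, hD⟩ := exists_mem_Fs s q
    have : Module.Finite K (LinearMap.ker (phi E M) ⊓ Fs K s D : Submodule K _) :=
      Submodule.finiteDimensional_inf_right _ _
    have heq := Submodule.eq_of_le_of_finrank_eq (inf_le_inf_right (Fs K s D) hle')
      (by rw [hdimN, hdimI, hs])
    have : q ∈ LinearMap.ker (phi E M) ⊓ Fs K s D := ⟨hq, hD⟩
    rw [← heq] at this
    exact this.1
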